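/- Let X be a Lagrangian subspace of a finite-dimensional symplectic space W over a non-archimedean local field F of characteristic zero, viewed as an abelian subgroup of the Heisenberg group H(W) via x ↦ (x,0). Let ω be an irreducible smooth representation of H(W) with central character ψ. Then there exists a nonzero linear functional on ω which is invariant under X, and such a linear functional is unique up to scalar multiples. -/

import Mathlib

/-!
Statement 3 (Lemma `haaro` of Sun–Zhu, after Cartier and Howe).

`F` is a non-archimedean local field of characteristic zero (axiomatized as a
non-discrete, totally disconnected, locally compact Hausdorff topological field
of characteristic zero), with a fixed nontrivial unitary character `ψ`.
`W` is a finite-dimensional symplectic `F`-space with symplectic form `B`, and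
`H(W)` is its Heisenberg group, realized concretely as `Heisenberg B` below.
`X` is a Lagrangian subspace of `W` (a totally isotropic subspace with
`dim W = 2 · dim X`), viewed inside `H(W)` via `x ↦ (x, 0)`.

Claim: for an irreducible smooth representation `ω` of `H(W)` with central
character `ψ`, there exists a nonzero linear functional on `ω` invariant under
`X`, and such a linear functional is unique up to scalar multiples.
-/

section Heisenberg

variable {F : Type} [Field F] {Wsp : Type} [AddCommGroup Wsp] [Module F Wsp]

/-- The Heisenberg group `H(W)` attached to a symplectic `F`-vector space `(Wsp, B)`:
as a set it is `Wsp × F`, with multiplication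
`(w,t)(w',t') = (w + w', t + t' + B w w')`. -/
@[ext]
structure Heisenberg (B : Wsp →ₗ[F] Wsp →ₗ[F] F) : Type where
  w : Wsp
  t : F

namespace Heisenberg

variable {B : Wsp →ₗ[F] Wsp →ₗ[F] F}

instance : Group (Heisenberg B) where
  mul x y := ⟨x.w + y.w, x.t + y.t + B x.w y.w⟩
  one := ⟨0, 0⟩
  inv x := ⟨-x.w, -x.t + B x.w x.w⟩
  mul_assoc x y z := by
    ext
    · exact add_assoc _ _ _
    · show x.t + y.t + B x.w y.w + z.t + B (x.w + y.w) z.w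
        = x.t + (y.t + z.t + B y.w z.w) + B x.w (y.w + z.w)
      simp only [map_add, LinearMap.add_apply]
      ring
  one_mul x := by
    ext
    · exact zero_add _
    · show 0 + x.t + B 0 x.w = x.t
      simp
  mul_one x := by
    ext
    · exact add_zero _
    · show x.t + 0 + B x.w 0 = x.t
      simp
  inv_mul_cancel x := by
    ext
    · exact neg_add_cancel _
    · show -x.t + B x.w x.w + x.t + B (-x.w) x.w = 0
      simp only [map_neg, LinearMap.neg_apply]
      ring

/-- The topology on the Heisenberg group, induced from `Wsp × F`. -/
instance [TopologicalSpace F] [TopologicalSpace Wsp] :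
    TopologicalSpace (Heisenberg B) :=
  TopologicalSpace.induced (fun x => (x.w, x.t)) inferInstance

end Heisenberg

end Heisenberg

/-- A representation of a topological group is *smooth* if every vector has an
open stabilizer. -/
def IsSmoothRep {G : Type} [Group G] [TopologicalSpace G] {V : Type}
    [AddCommGroup V] [Module ℂ V] (ρ : Representation ℂ G V) : Prop :=
  ∀ v : V, IsOpen {g : G | ρ g v = v}

/-
Characters are separated by trigonometric polynomials: if a compact, locally constant family of
characters of a group avoids `χ₀`, then a product of linear factors in the group algebra takes the
value `1` at `χ₀` and vanishes on the family. With linear independence of characters, this also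
gives the self-duality of `F`.

Existence. Every element of `X` has finite order on each vector of `ω`, because the multiples of an
element of `F` accumulate at `0`. So the quotient of `ℂ[X]` by the annihilator of a nonzero vector
is integral over `ℂ`, has a `ℂ`-point, and the latter yields an `X`-eigenfunctional on `ω`. Its
eigencharacter is `x ↦ ψ (2 B(w, x))` for some `w`, by self-duality of `F` and nondegeneracy of
`B`, and translating by `-w` makes the functional invariant.

Uniqueness. Let `l`, `l'` be invariant with `l v = 0`. As in the Schrödinger model, `v` is
determined by the function `w ↦ l (ω (w, 0) v)` on a complement of `X`, on which `x ∈ X` acts as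
multiplication by `ψ (2 B(w, x))`. By smoothness this function is supported in a compact set, and it
vanishes near `0` because `l v = 0`. A trigonometric polynomial `P` which is `1` at `0` and vanishes
on the support thus satisfies `P v = 0`, whence `l' v = l' (P v) = 0`.
-/

open Filter Topology

section TopologicalGroups

theorem isOpen_setOf_forall_mem {A K L : Type*} [TopologicalSpace A] [TopologicalSpace K]
    [TopologicalSpace L] {f : A → K → L} (hf : Continuous fun q : A × K => f q.1 q.2)
    {C : Set K} (hC : IsCompact C) {U : Set L} (hU : IsOpen U) :
    IsOpen {a | ∀ k ∈ C, f a k ∈ U} :=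
  isOpen_iff_mem_nhds.2 fun _ ha =>
    hC.eventually_forall_of_forall_eventually fun k hk =>
      hf.continuousAt.eventually_mem (hU.mem_nhds (ha k hk))

variable {A : Type*} [AddCommGroup A] [TopologicalSpace A] [IsTopologicalAddGroup A]

theorem exists_lt_sub_mem_of_isCompact {K U : Set A} (hK : IsCompact K) (hU : U ∈ 𝓝 (0 : A))
    {f : ℕ → A} (hf : ∀ n, f n ∈ K) : ∃ n m, n < m ∧ f m - f n ∈ U := by
  obtain ⟨x, -, hx⟩ := hK.exists_mapClusterPt (f := atTop) (u := f)
    (tendsto_principal.2 (Eventually.of_forall hf))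
  have hsub : (fun q : A × A => q.2 - q.1) ⁻¹' U ∈ 𝓝 (x, x) :=
    (continuous_snd.sub continuous_fst).continuousAt.preimage_mem_nhds (by simpa using hU)
  obtain ⟨s, hs, t, ht, hst⟩ := mem_nhds_prod_iff.1 hsub
  have hfreq := mapClusterPt_iff_frequently.1 hx (s ∩ t) (inter_mem hs ht)
  obtain ⟨n, hn⟩ := hfreq.exists
  obtain ⟨m, hm, hnm⟩ := (hfreq.and_eventually (eventually_gt_atTop n)).exists
  exact ⟨n, m, hnm, hst (Set.mk_mem_prod hn.1 hm.2)⟩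

theorem exists_isOpen_isCompact_addSubgroup (A : Type*) [AddCommGroup A] [TopologicalSpace A]
    [IsTopologicalAddGroup A] [LocallyCompactSpace A] [TotallyDisconnectedSpace A] [T2Space A] :
    ∃ U : AddSubgroup A, IsOpen (U : Set A) ∧ IsCompact (U : Set A) := by
  obtain ⟨K, hK, hK0⟩ := exists_compact_mem_nhds (0 : A)
  obtain ⟨C, hC, h0, hCK⟩ := (loc_compact_Haus_tot_disc_of_zero_dim (H := A)).mem_nhds_iff.1 hK0
  have hCc : IsCompact C := hK.of_isClosed_subset hC.1 hCK
  let U : AddSubgroup A :=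
    { carrier := {a | (∀ c ∈ C, a + c ∈ C) ∧ ∀ c ∈ C, -a + c ∈ C}
      zero_mem' := by simp
      add_mem' := fun {a b} ha hb =>
        ⟨fun c hc => by rw [add_assoc]; exact ha.1 _ (hb.1 c hc),
          fun c hc => by rw [neg_add_rev, add_assoc]; exact hb.2 _ (ha.2 c hc)⟩
      neg_mem' := fun {a} ha => ⟨ha.2, by simpa using ha.1⟩ }
  have hU : IsOpen (U : Set A) :=
    (isOpen_setOf_forall_mem (f := fun a c : A => a + c) (by fun_prop) hCc hC.2).inter
      (isOpen_setOf_forall_mem (f := fun a c : A => -a + c) (by fun_prop) hCc hC.2)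
  exact ⟨U, hU, hCc.of_isClosed_subset (U.isClosed_of_isOpen hU)
    fun a ha => by simpa using ha.1 0 h0⟩

end TopologicalGroups

section TopologicalFields

variable {F : Type*} [Field F] [TopologicalSpace F] [IsTopologicalRing F]

theorem exists_ne_zero_mem_of_mem_nhds_zero (hF : ¬ DiscreteTopology F) {U : Set F}
    (hU : U ∈ 𝓝 (0 : F)) : ∃ t ∈ U, t ≠ 0 := by
  by_contra! h
  exact hF (discreteTopology_of_isOpen_singleton_zero
    (isOpen_singleton_iff_nhds_eq_pure 0 |>.2 <| le_antisymm (le_pure_iff.2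
      (mem_of_superset hU h)) (pure_le_nhds 0)))

theorem eventually_forall_mul_mem {K U : Set F} (hK : IsCompact K) (hU : U ∈ 𝓝 (0 : F)) :
    ∀ᶠ t in 𝓝 (0 : F), ∀ x ∈ K, t * x ∈ U := by
  have h := isOpen_setOf_forall_mem (f := fun t x : F => t * x) (by fun_prop) hK
    (isOpen_interior (s := U))
  filter_upwards [h.mem_nhds (by simp [mem_interior_iff_mem_nhds.2 hU])] with t ht x hx
  exact interior_subset (ht x hx)

theorem exists_isOpen_isCompact_subring [LocallyCompactSpace F] [TotallyDisconnectedSpace F]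
    [T2Space F] (hF : ¬ DiscreteTopology F) :
    ∃ O : Subring F, IsOpen (O : Set F) ∧ IsCompact (O : Set F) := by
  obtain ⟨U, hUo, hUc⟩ := exists_isOpen_isCompact_addSubgroup F
  obtain ⟨u, hu, hu0⟩ := exists_ne_zero_mem_of_mem_nhds_zero hF (hUo.mem_nhds U.zero_mem)
  let O : Subring F :=
    { carrier := {a | ∀ c ∈ U, a * c ∈ U}
      zero_mem' := by simp
      one_mem' := by simp
      add_mem' := fun ha hb c hc => by rw [add_mul]; exact U.add_mem (ha c hc) (hb c hc)
      mul_mem' := fun ha hb c hc => by rw [mul_assoc]; exact ha _ (hb c hc)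
      neg_mem' := fun ha c hc => by rw [neg_mul]; exact U.neg_mem (ha c hc) }
  have hO : IsOpen (O : Set F) :=
    isOpen_setOf_forall_mem (f := fun a c : F => a * c) (by fun_prop) hUc hUo
  refine ⟨O, hO, (hUc.image (continuous_mul_const u⁻¹)).of_isClosed_subset
    (O.toAddSubgroup.isClosed_of_isOpen hO) fun a ha => ⟨a * u, ha u hu, ?_⟩⟩
  exact mul_inv_cancel_right₀ hu0 a

variable {O : Subring F}

theorem exists_pos_natCast_mem (hO : IsCompact (O : Set F)) {U : Set F} (hU : U ∈ 𝓝 (0 : F)) :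
    ∃ N : ℕ, 0 < N ∧ (N : F) ∈ U := by
  obtain ⟨n, m, hnm, h⟩ := exists_lt_sub_mem_of_isCompact hO hU (f := fun n : ℕ => (n : F))
    (fun n => natCast_mem O n)
  exact ⟨m - n, Nat.sub_pos_of_lt hnm, by rwa [Nat.cast_sub hnm.le]⟩

theorem isTopologicallyNilpotent_mul (hO : IsCompact (O : Set F)) {p b : F}
    (hnil : IsTopologicallyNilpotent p) (hb : b ∈ O) : IsTopologicallyNilpotent (p * b) := by
  refine tendsto_def.2 fun U hU => ?_
  filter_upwards [hnil.eventually (eventually_forall_mul_mem hO hU)] with n hn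
  rw [Set.mem_preimage, mul_pow]
  exact hn _ (pow_mem hb n)

variable [T2Space F]

/- If the powers of `p` had a cluster point `x ≠ 0`, then `x` would be divisible by all of them and
two powers would be congruent modulo `x`, which makes `p` a unit. -/
theorem isTopologicallyNilpotent_of_forall_mul_ne_one (hOo : IsOpen (O : Set F))
    (hOc : IsCompact (O : Set F)) {p : F} (hp : p ∈ O) (hp0 : p ≠ 0)
    (hp1 : ∀ b ∈ O, p * b ≠ 1) : IsTopologicallyNilpotent p := by
  refine hOc.tendsto_nhds_of_unique_mapClusterPt (Eventually.of_forall fun n => pow_mem hp n)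
    fun x _ hx => ?_
  by_contra hx0
  have hmem (n : ℕ) : x ∈ (p ^ n * ·) '' (O : Set F) := by
    refine (hOc.image (continuous_const_mul _)).isClosed.mem_of_mapClusterPt hx ?_
    filter_upwards [eventually_ge_atTop n] with m hm
    exact ⟨p ^ (m - n), pow_mem hp _, pow_mul_pow_sub p hm⟩
  have hxO : (x * ·) '' (O : Set F) ∈ 𝓝 0 :=
    ((Homeomorph.mulLeft₀ x hx0).isOpenMap _ hOo).mem_nhds ⟨0, O.zero_mem, mul_zero x⟩
  obtain ⟨n, m, hnm, b, hb, hpx⟩ := exists_lt_sub_mem_of_isCompact hOc hxO fun n => pow_mem hp n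
  obtain ⟨c, hc, hpc⟩ := hmem (n + 1)
  obtain ⟨k, rfl⟩ := Nat.exists_eq_add_of_lt hnm
  refine hp1 (p ^ k - c * b) (sub_mem (pow_mem hp k) (mul_mem hc hb))
    (mul_left_cancel₀ (pow_ne_zero n hp0) ?_)
  linear_combination -hpx - b * hpc

theorem exists_isTopologicallyNilpotent (hF : ¬ DiscreteTopology F) (hOo : IsOpen (O : Set F))
    (hOc : IsCompact (O : Set F)) : ∃ p ∈ O, p ≠ 0 ∧ IsTopologicallyNilpotent p := by
  have hne : ({1}ᶜ : Set F) ∈ 𝓝 0 := isOpen_compl_singleton.mem_nhds (by simp)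
  obtain ⟨p, ⟨hp1, hp⟩, hp0⟩ := exists_ne_zero_mem_of_mem_nhds_zero hF
    (inter_mem (eventually_forall_mul_mem hOc hne) (hOo.mem_nhds O.zero_mem))
  exact ⟨p, hp, hp0, isTopologicallyNilpotent_of_forall_mul_ne_one hOo hOc hp hp0 hp1⟩

theorem exists_mem_one_sub_mul_eq_one (hO : IsCompact (O : Set F)) {q : F} (hq : q ∈ O)
    (hnil : IsTopologicallyNilpotent q) : ∃ d ∈ O, (1 - q) * d = 1 := by
  have hclosed : IsClosed (((1 - q) * ·) '' (O : Set F)) :=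
    (hO.image (continuous_const_mul _)).isClosed
  have hlim : Tendsto (fun n => 1 - q ^ n) atTop (𝓝 1) := by
    simpa using tendsto_const_nhds.sub hnil
  exact hclosed.mem_of_tendsto hlim (Eventually.of_forall fun n =>
    ⟨∑ i ∈ Finset.range n, q ^ i, sum_mem fun i _ => pow_mem hq i, mul_neg_geom_sum q n⟩)

theorem exists_isCompact_forall_inv_mem (hOo : IsOpen (O : Set F)) (hOc : IsCompact (O : Set F))
    {p : F} (hp : p ∈ O) (hp0 : p ≠ 0) (hnil : IsTopologicallyNilpotent p) {C : Set F}
    (hC : IsCompact C) (hC0 : 0 ∉ C) : ∃ L, IsCompact L ∧ ∀ u ∈ C, u⁻¹ ∈ L := by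
  refine hC.induction_on (p := fun s => ∃ L, IsCompact L ∧ ∀ u ∈ s, u⁻¹ ∈ L)
    ⟨∅, isCompact_empty, by simp⟩ (fun s t hst ⟨L, hL, ht⟩ => ⟨L, hL, fun u hu => ht u (hst hu)⟩)
    (fun s t ⟨L, hL, hs⟩ ⟨L', hL', ht⟩ => ⟨L ∪ L', hL.union hL', fun u hu =>
      hu.imp (hs u) (ht u)⟩) fun u₀ hu₀ => ?_
  have hu₀0 : u₀ ≠ 0 := ne_of_mem_of_not_mem hu₀ hC0
  have hnhds : {u | p⁻¹ * (1 - u₀⁻¹ * u) ∈ O} ∈ 𝓝 u₀ :=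
    (hOo.preimage (f := fun u => p⁻¹ * (1 - u₀⁻¹ * u)) (by fun_prop)).mem_nhds
      (by simp [hu₀0, O.zero_mem])
  refine ⟨_, mem_nhdsWithin_of_mem_nhds hnhds, (u₀⁻¹ * ·) '' (O : Set F),
    hOc.image (continuous_const_mul _), fun u hu => ?_⟩
  obtain ⟨d, hd, hmul⟩ := exists_mem_one_sub_mul_eq_one hOc (mul_mem hp hu)
    (isTopologicallyNilpotent_mul hOc hnil hu)
  refine ⟨d, hd, eq_inv_of_mul_eq_one_right ?_⟩
  rw [← hmul]
  field_simp
  ring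

/- In place of an absolute value: a large `y` is `p ^ (-n) * u` with `n` large and `u` in the
compact set `O \ p O`, whose inverses stay in a compact set. -/
theorem tendsto_inv_cocompact [LocallyCompactSpace F] [TotallyDisconnectedSpace F]
    (hF : ¬ DiscreteTopology F) : Tendsto (·⁻¹) (cocompact F) (𝓝 (0 : F)) := by
  obtain ⟨O, hOo, hOc⟩ := exists_isOpen_isCompact_subring hF
  obtain ⟨p, hp, hp0, hnil⟩ := exists_isTopologicallyNilpotent hF hOo hOc
  obtain ⟨L, hL, hinv⟩ := exists_isCompact_forall_inv_mem hOo hOc hp hp0 hnil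
    (hOc.diff ((Homeomorph.mulLeft₀ p hp0).isOpenMap _ hOo))
    (fun h => h.2 ⟨0, O.zero_mem, mul_zero p⟩)
  refine fun U hU => mem_cocompact.2 ?_
  obtain ⟨M, hM⟩ := eventually_atTop.1 (hnil.eventually (eventually_forall_mul_mem hL hU))
  refine ⟨((p ^ M)⁻¹ * ·) '' (O : Set F), hOc.image (continuous_const_mul _), fun y hy => ?_⟩
  have hyM : p ^ M * y ∉ O := fun h => hy ⟨_, h, inv_mul_cancel_left₀ (pow_ne_zero M hp0) y⟩
  have habs : ∃ n, p ^ n * y ∈ O :=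
    (hnil.eventually (eventually_forall_mul_mem isCompact_singleton
      (hOo.mem_nhds O.zero_mem))).exists.imp fun n hn => hn y rfl
  classical
  obtain ⟨k, hk⟩ : ∃ k, Nat.find habs = M + k + 1 := Nat.exists_eq_add_of_lt <| by
    refine lt_of_not_ge fun hle => hyM ?_
    rw [← pow_mul_pow_sub p hle, mul_comm (p ^ _), mul_assoc]
    exact mul_mem (pow_mem hp _) (Nat.find_spec habs)
  have hu : p ^ (M + k + 1) * y ∈ (O : Set F) \ (p * ·) '' O := by
    refine ⟨hk ▸ Nat.find_spec habs, fun ⟨b, hb, hpb⟩ => Nat.find_min habs (m := M + k) ?_ ?_⟩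
    · omega
    · rw [pow_succ', mul_assoc] at hpb
      exact mul_left_cancel₀ hp0 hpb ▸ hb
  have hy' : y⁻¹ = p ^ (M + k + 1) * (p ^ (M + k + 1) * y)⁻¹ := by
    rw [mul_inv, mul_inv_cancel_left₀ (pow_ne_zero _ hp0)]
  rw [Set.mem_preimage, hy']
  exact hM _ (by omega) _ (hinv _ hu)

end TopologicalFields

section Characters

theorem linearCombination_eq_zero_of_factorsThrough {X M L : Type*} [Monoid M] [CommRing L]
    [IsDomain L] {f : X → M →* L} {g : X → L} (hg : g.FactorsThrough f) {c : X →₀ L}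
    (hc : ∀ y, Finsupp.linearCombination L (f · y) c = 0) :
    Finsupp.linearCombination L g c = 0 := by
  have hzero : c.mapDomain f = 0 := by
    refine linearIndependent_iff.1 (linearIndependent_monoidHom M L) _ (funext fun y => ?_)
    rw [Finsupp.linearCombination_mapDomain, Finsupp.linearCombination_apply, Finsupp.sum_apply']
    exact hc y
  have hfactor : g = Function.extend f g 0 ∘ f := funext fun x => (hg.extend_apply 0 x).symm
  rw [hfactor, ← Finsupp.linearCombination_mapDomain, hzero, map_zero]

theorem exists_lift_eq_one_forall_lift_eq_zero {G Y k : Type*} [Monoid G] [TopologicalSpace Y]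
    [Field k] {χ : Y → G →* k} (hχ : ∀ g, IsLocallyConstant fun y => χ y g) {χ₀ : G →* k}
    {K : Set Y} (hK : IsCompact K) (hne : ∀ y ∈ K, χ y ≠ χ₀) :
    ∃ P : MonoidAlgebra k G, MonoidAlgebra.lift k k G χ₀ P = 1 ∧
      ∀ y ∈ K, MonoidAlgebra.lift k k G (χ y) P = 0 := by
  refine hK.induction_on (p := fun s => ∃ P : MonoidAlgebra k G,
      MonoidAlgebra.lift k k G χ₀ P = 1 ∧ ∀ y ∈ s, MonoidAlgebra.lift k k G (χ y) P = 0)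
    ⟨1, map_one _, by simp⟩
    (fun s t hst ⟨P, h1, h0⟩ => ⟨P, h1, fun y hy => h0 y (hst hy)⟩)
    (fun s t ⟨P, hP1, hP0⟩ ⟨Q, hQ1, hQ0⟩ => ⟨P * Q, by simp only [map_mul, hP1, hQ1, one_mul],
      fun y hy => ?_⟩) fun y₀ hy₀ => ?_
  · rcases hy with hy | hy
    · rw [map_mul, hP0 y hy, zero_mul]
    · rw [map_mul, hQ0 y hy, mul_zero]
  · obtain ⟨g, hg⟩ := DFunLike.ne_iff.1 (hne y₀ hy₀)
    refine ⟨_, mem_nhdsWithin_of_mem_nhds ((hχ g).eventually_eq y₀),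
      (χ₀ g - χ y₀ g)⁻¹ • (MonoidAlgebra.of k G g - algebraMap k _ (χ y₀ g)), ?_, fun y hy => ?_⟩
    · rw [map_smul, map_sub, MonoidAlgebra.lift_of, AlgHom.commutes, Algebra.algebraMap_self_apply,
        smul_eq_mul, inv_mul_cancel₀ (sub_ne_zero.2 hg.symm)]
    · rw [map_smul, map_sub, MonoidAlgebra.lift_of, AlgHom.commutes, Algebra.algebraMap_self_apply,
        show χ y g = χ y₀ g from hy, sub_self, smul_zero]

theorem addChar_sub_eq_one_iff {A k : Type*} [AddCommGroup A] [Field k] (ψ : AddChar A k)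
    {a b : A} : ψ (a - b) = 1 ↔ ψ a = ψ b := by
  rw [AddChar.map_sub_eq_div, div_eq_one_iff_eq (ψ.val_isUnit b).ne_zero]

theorem isLocallyConstant_of_mem_nhds_zero {A M : Type*} [AddCommGroup A] [TopologicalSpace A]
    [IsTopologicalAddGroup A] [Monoid M] {θ : AddChar A M} (h : {x | θ x = 1} ∈ 𝓝 0) :
    IsLocallyConstant θ := by
  refine (IsLocallyConstant.iff_eventually_eq _).2 fun x => ?_
  filter_upwards [(continuous_sub_right x).continuousAt.preimage_mem_nhds
    (by rwa [sub_self])] with y hy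
  rw [← sub_add_cancel y x, AddChar.map_add_eq_mul, show θ (y - x) = 1 from hy, one_mul]

variable {F : Type*} [Field F] [TopologicalSpace F] [IsTopologicalRing F]
  [LocallyCompactSpace F] [TotallyDisconnectedSpace F] [T2Space F]
  {M : Type*} [CommMonoid M] {ψ : AddChar F M}

theorem isCompact_setOf_forall_eq_one (hF : ¬ DiscreteTopology F) (hψ : IsLocallyConstant ψ)
    (hψ_ne : ψ ≠ 1) {U : Set F} (hU : U ∈ 𝓝 0) : IsCompact {y | ∀ t ∈ U, ψ (y * t) = 1} := by
  obtain ⟨z, hz⟩ := AddChar.ne_one_iff.1 hψ_ne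
  have hclosed : IsClosed {y | ∀ t ∈ U, ψ (y * t) = 1} := by
    simp only [Set.ofPred_forall]
    exact isClosed_biInter fun t _ => (hψ.isClosed_fiber 1).preimage (continuous_mul_const t)
  have hlim : Tendsto (fun y : F => y⁻¹ * z) (cocompact F) (𝓝 0) := by
    simpa using (tendsto_inv_cocompact hF).mul_const z
  obtain ⟨K, hK, hKU⟩ := mem_cocompact.1
    (inter_mem (hlim hU) isCompact_singleton.compl_mem_cocompact (s := _) (t := {0}ᶜ))
  refine hK.of_isClosed_subset hclosed fun y hy => by_contra fun hyK => hz ?_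
  simpa [mul_inv_cancel_left₀ (hKU hyK).2] using hy _ (hKU hyK).1

theorem exists_isCompact_addSubgroup_forall_mem (hF : ¬ DiscreteTopology F)
    (hψ : IsLocallyConstant ψ) (hψ_ne : ψ ≠ 1) {U : Set F} (hU : U ∈ 𝓝 0) :
    ∃ K : AddSubgroup F, IsCompact (K : Set F) ∧ ∀ x, (∀ y ∈ K, ψ (y * x) = 1) → x ∈ U := by
  obtain ⟨O, hOo, hOc⟩ := exists_isOpen_isCompact_subring hF
  obtain ⟨t, ht, ht0⟩ := exists_ne_zero_mem_of_mem_nhds_zero hF (eventually_forall_mul_mem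
    (isCompact_setOf_forall_eq_one hF hψ hψ_ne (hOo.mem_nhds O.zero_mem)) hU)
  refine ⟨O.toAddSubgroup.map (AddMonoidHom.mulLeft t⁻¹), hOc.image (continuous_const_mul t⁻¹),
    fun x hx => ?_⟩
  rw [← mul_inv_cancel_left₀ ht0 x]
  refine ht _ fun b hb => ?_
  rw [mul_right_comm]
  exact hx _ ⟨b, hb, rfl⟩

/- Otherwise `θ` is separated from the shifts of `ψ` by a compact group `K` so large that `θ` is a
function of the restricted pairing with `K`; this contradicts the linear independence of the
characters of `K`. -/
theorem exists_eq_mulShift {k : Type*} [Field k] {ψ θ : AddChar F k} (hF : ¬ DiscreteTopology F)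
    (hψ : IsLocallyConstant ψ) (hψ_ne : ψ ≠ 1) (hθ : IsLocallyConstant θ) :
    ∃ a, θ = ψ.mulShift a := by
  obtain ⟨K, hK, hKθ⟩ := exists_isCompact_addSubgroup_forall_mem hF hψ hψ_ne
    ((hθ.isOpen_fiber 1).mem_nhds θ.map_zero_eq_one)
  by_contra! hne
  obtain ⟨P, hP1, hP0⟩ := exists_lift_eq_one_forall_lift_eq_zero
    (χ := fun y => (ψ.mulShift y).toMonoidHom) (χ₀ := θ.toMonoidHom)
    (fun x => hψ.comp_continuous (continuous_mul_const (Multiplicative.toAdd x))) hK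
    fun y _ h => hne y (AddChar.toMonoidHomEquiv.injective h.symm)
  refine one_ne_zero (hP1.symm.trans (linearCombination_eq_zero_of_factorsThrough
    (M := Multiplicative K) (c := P.coeff) (f := fun x =>
      ((ψ.mulShift (Multiplicative.toAdd x)).compAddMonoidHom K.subtype).toMonoidHom) ?_ ?_))
  · intro x x' h
    refine (addChar_sub_eq_one_iff θ (a := x.toAdd) (b := x'.toAdd)).1 (hKθ _ fun y hy => ?_)
    rw [mul_sub, addChar_sub_eq_one_iff, mul_comm y, mul_comm y]
    exact DFunLike.congr_fun h (Multiplicative.ofAdd ⟨y, hy⟩)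
  · intro y
    rw [← hP0 _ (Multiplicative.toAdd y).2, MonoidAlgebra.lift_apply,
      Finsupp.linearCombination_apply]
    simp [mul_comm]

theorem exists_linearMap_forall_eq {k X : Type*} [Field k] [AddCommGroup X] [Module F X]
    [FiniteDimensional F X] {ψ : AddChar F k} {θ : AddChar X k} (hF : ¬ DiscreteTopology F)
    (hψ : IsLocallyConstant ψ) (hψ_ne : ψ ≠ 1)
    (hθ : ∀ x, IsLocallyConstant fun t : F => θ (t • x)) :
    ∃ f : X →ₗ[F] F, ∀ x, θ x = ψ (f x) := by
  let b := Module.finBasis F X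
  have hline (i) : ∃ a, ∀ t, θ (t • b i) = ψ (a * t) :=
    (exists_eq_mulShift hF hψ hψ_ne
      (θ := θ.compAddMonoidHom (LinearMap.toSpanSingleton F X (b i)).toAddMonoidHom)
      (hθ (b i))).imp fun a ha t => DFunLike.congr_fun ha t
  choose a ha using hline
  refine ⟨b.constr F a, fun x => ?_⟩
  rw [← b.sum_repr x]
  refine Finset.sum_induction _ (fun x => θ x = ψ (b.constr F a x)) (fun x y hx hy => ?_) ?_
    fun i _ => ?_
  · rw [AddChar.map_add_eq_mul, hx, hy, map_add, AddChar.map_add_eq_mul]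
  · simp only [map_zero, AddChar.map_zero_eq_one]
  · rw [ha, map_smul, b.constr_basis, smul_eq_mul, mul_comm]

end Characters

section Eigenfunctionals

variable {A G k V : Type*} [Field k]

theorem exists_algHom_forall_mem_eq_zero [CommRing A] [Algebra k A] [IsAlgClosed k] {I : Ideal A}
    (hI : I ≠ ⊤) [Algebra.IsIntegral k (A ⧸ I)] : ∃ f : A →ₐ[k] k, ∀ a ∈ I, f a = 0 := by
  obtain ⟨m, hm, hIm⟩ := Ideal.exists_le_maximal I hI
  have : Algebra.IsIntegral k (A ⧸ m) :=
    Algebra.IsIntegral.of_surjective (Ideal.Quotient.factorₐ k hIm)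
      (Ideal.Quotient.factor_surjective hIm)
  let e : k ≃ₐ[k] A ⧸ m :=
    AlgEquiv.ofBijective (Algebra.ofId k _) IsAlgClosed.algebraMap_bijective_of_isIntegral
  refine ⟨e.symm.toAlgHom.comp (Ideal.Quotient.mkₐ k m), fun a ha => ?_⟩
  simp [Ideal.Quotient.eq_zero_iff_mem.2 (hIm ha)]

theorem exists_map_eq_one_pow_sub_one_dvd [CommRing A] [Algebra k A] (f : A →ₐ[k] k) {a : A}
    {N : ℕ} (hN : (N : k) ≠ 0) (hfa : f a ^ N = 1) :
    ∃ e, f e = 1 ∧ a ^ N - 1 ∣ e * (a - algebraMap k A (f a)) := by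
  let S := ∑ i ∈ Finset.range N, a ^ i * algebraMap k A (f a) ^ (N - 1 - i)
  have hfS : f S = N * f a ^ (N - 1) := by
    simp only [S, map_sum, map_mul, map_pow, AlgHom.commutes, Algebra.algebraMap_self_apply,
      geom_sum₂_self]
  have hfa0 : f a ≠ 0 :=
    (IsUnit.of_pow_eq_one hfa fun h => hN (by rw [h, Nat.cast_zero])).ne_zero
  have hfS0 : f S ≠ 0 := hfS ▸ mul_ne_zero hN (pow_ne_zero _ hfa0)
  refine ⟨(f S)⁻¹ • S, ?_, algebraMap k A (f S)⁻¹, ?_⟩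
  · rw [map_smul, smul_eq_mul, inv_mul_cancel₀ hfS0]
  · rw [smul_mul_assoc, (Commute.all _ _).geom_sum₂_mul, ← map_pow, hfa, map_one,
      Algebra.smul_def, mul_comm]

variable [AddCommGroup V]

theorem isIntegral_quotient_torsionOf [CommGroup G] [Module (MonoidAlgebra k G) V] {v : V}
    (h : ∀ g, ∃ N ≠ 0, MonoidAlgebra.of k G g ^ N • v = v) :
    Algebra.IsIntegral k (MonoidAlgebra k G ⧸ Ideal.torsionOf (MonoidAlgebra k G) V v) := by
  refine ⟨fun x => ?_⟩
  obtain ⟨a, rfl⟩ := Ideal.Quotient.mk_surjective x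
  induction a using MonoidAlgebra.induction_on with
  | of g =>
    obtain ⟨N, hN, hg⟩ := h g
    refine IsIntegral.of_pow (Nat.pos_of_ne_zero hN) ?_
    convert isIntegral_one (R := k)
    rw [← map_pow, ← map_one (Ideal.Quotient.mk _), Ideal.Quotient.eq, Ideal.mem_torsionOf_iff,
      sub_smul, hg, one_smul, sub_self]
  | add a b ha hb => rw [map_add]; exact ha.add hb
  | smul c a ha => exact ha.smul c

variable [Module k V]

theorem exists_linearMap_ne_zero_forall_mem_eq_zero [CommRing A] [Algebra k A] [Module A V]
    [IsScalarTower k A V] {f : A →ₐ[k] k} {v : V} (hv : ∀ a ∈ Ideal.torsionOf A V v, f a = 0)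
    {s : Set V} (hs : ∀ n ∈ s, ∃ e : A, f e = 1 ∧ e • n = 0) :
    ∃ μ : V →ₗ[k] k, μ v ≠ 0 ∧ ∀ n ∈ s, μ n = 0 := by
  have hspan (n : V) (hn : n ∈ Submodule.span k s) : ∃ e : A, f e = 1 ∧ e • n = 0 := by
    induction hn using Submodule.span_induction with
    | mem n hn => exact hs n hn
    | zero => exact ⟨1, map_one f, smul_zero _⟩
    | add n n' _ _ hn hn' =>
      obtain ⟨e, hfe, hen⟩ := hn
      obtain ⟨e', hfe', hen'⟩ := hn'
      refine ⟨e * e', by rw [map_mul, hfe, hfe', one_mul], ?_⟩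
      rw [smul_add, mul_smul e e' n', hen', smul_zero, mul_comm, mul_smul, hen, smul_zero,
        add_zero]
    | smul c n _ hn => exact hn.imp fun e he => ⟨he.1, by rw [smul_comm, he.2, smul_zero]⟩
  have hvs : v ∉ Submodule.span k s := fun h => by
    obtain ⟨e, hfe, hev⟩ := hspan v h
    exact one_ne_zero (hfe.symm.trans (hv e hev))
  obtain ⟨μ, hμv, hμ⟩ := Submodule.exists_le_ker_of_notMem hvs
  exact ⟨μ, hμv, fun n hn => hμ (Submodule.subset_span hn)⟩

theorem exists_map_eq_one_smul_sub_eq_zero [CharZero k] [CommRing A] [Algebra k A] [Module A V]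
    [IsScalarTower k A V] (f : A →ₐ[k] k) {a : A} {N M : ℕ} (hN : N ≠ 0) (hM : M ≠ 0)
    (hfa : f a ^ N = 1) {u : V} (hu : a ^ M • u = u) :
    ∃ e, f e = 1 ∧ e • (a • u - f a • u) = 0 := by
  obtain ⟨e, hfe, hdvd⟩ := exists_map_eq_one_pow_sub_one_dvd f (a := a) (N := M * N)
    (by exact_mod_cast mul_ne_zero hM hN) (by rw [mul_comm, pow_mul, hfa, one_pow])
  have hpow : a ^ M - 1 ∣ a ^ (M * N) - 1 := by
    simpa only [pow_mul, one_pow] using sub_dvd_pow_sub_pow (a ^ M) 1 N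
  obtain ⟨d, hd⟩ := hpow.trans hdvd
  refine ⟨e, hfe, ?_⟩
  rw [← algebraMap_smul A (f a), ← sub_smul, ← mul_smul, hd, mul_comm, mul_smul, sub_smul, hu,
    one_smul, sub_self, smul_zero]

theorem exists_eigenfunctional [CommGroup G] [IsAlgClosed k] [CharZero k]
    {ρ : Representation k G V} {v : V} (hv : v ≠ 0) (hρ : ∀ g u, ∃ N ≠ 0, ρ (g ^ N) u = u) :
    ∃ (χ : G →* k) (μ : V →ₗ[k] k), μ v ≠ 0 ∧ ∀ g u, μ (ρ g u) = χ g * μ u := by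
  let E := ρ.asModuleEquiv.symm
  let a := MonoidAlgebra.of k G
  have ha (g u) : E (ρ g u) = a g • E u := ρ.asModuleEquiv_symm_map_rho g u
  have hperiod (g u) : ∃ N ≠ 0, a g ^ N • E u = E u :=
    (hρ g u).imp fun N ⟨hN, h⟩ => ⟨hN, by rw [← map_pow, ← ha, h]⟩
  have := isIntegral_quotient_torsionOf (hperiod · v)
  obtain ⟨f, hf⟩ := exists_algHom_forall_mem_eq_zero (k := k)
    (mt (Ideal.torsionOf_eq_top_iff (MonoidAlgebra k G) (E v)).1 (E.map_ne_zero_iff.2 hv))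
  have hfa (g) : ∃ N ≠ 0, f (a g) ^ N = 1 := by
    obtain ⟨N, hN, hgv⟩ := hperiod g v
    refine ⟨N, hN, ?_⟩
    rw [← map_pow, ← sub_eq_zero, ← map_one f, ← map_sub]
    exact hf _ ((Ideal.mem_torsionOf_iff _ _).2 (by rw [sub_smul, hgv, one_smul, sub_self]))
  obtain ⟨μ, hμv, hμ⟩ := exists_linearMap_ne_zero_forall_mem_eq_zero hf
    (s := {n | ∃ g u, a g • E u - f (a g) • E u = n}) <| by
      rintro _ ⟨g, u, rfl⟩
      obtain ⟨N, hN, hgN⟩ := hfa g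
      obtain ⟨M, hM, hgM⟩ := hperiod g u
      exact exists_map_eq_one_smul_sub_eq_zero f hN hM hgN hgM
  refine ⟨(f : MonoidAlgebra k G →* k).comp a, μ ∘ₗ E.toLinearMap, hμv, fun g u => ?_⟩
  change μ (E (ρ g u)) = f (a g) * μ (E u)
  rw [ha, ← smul_eq_mul, ← μ.map_smul, ← sub_eq_zero, ← map_sub, hμ _ ⟨g, u, rfl⟩]

end Eigenfunctionals

section LagrangianSubspaces

variable {F W : Type*} [Field F] [AddCommGroup W] [Module F W] [FiniteDimensional F W]
  {B : LinearMap.BilinForm F W} {X : Submodule F W}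

theorem exists_forall_mem_apply_eq (hB : B.Nondegenerate) (f : X →ₗ[F] F) :
    ∃ w, ∀ x : X, B w x = f x := by
  obtain ⟨g, rfl⟩ := LinearMap.exists_extend f
  exact ⟨(B.toDual hB).symm g, fun x => B.apply_toDual_symm_apply g x⟩

theorem orthogonal_eq_of_isotropic_of_finrank_eq (hB : B.Nondegenerate)
    (hX : ∀ x ∈ X, ∀ y ∈ X, B x y = 0) (hdim : Module.finrank F W = 2 * Module.finrank F X) :
    B.orthogonal X = X := by
  have hle : X ≤ B.orthogonal X := fun x hx y hy => hX y hy x hx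
  refine (Submodule.eq_of_le_of_finrank_eq hle ?_).symm
  rw [LinearMap.BilinForm.finrank_orthogonal hB]
  omega

theorem exists_rightInverse_of_lagrangian (hB : B.Nondegenerate) (halt : B.IsAlt)
    (hX : ∀ x ∈ X, ∀ y ∈ X, B x y = 0) (hdim : Module.finrank F W = 2 * Module.finrank F X)
    {ι : Type*} (b : Module.Basis ι F X) :
    ∃ s : (ι → F) →ₗ[F] W, (∀ a i, B (s a) (b i) = a i) ∧
      ∀ w, w - s (fun i => B w (b i)) ∈ X := by
  let A : W →ₗ[F] ι → F := LinearMap.pi fun i => B.flip (b i)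
  have hA : Function.Surjective A := fun a =>
    (exists_forall_mem_apply_eq hB (b.constr F a)).imp fun w hw =>
      funext fun i => (hw (b i)).trans (b.constr_basis F a i)
  obtain ⟨s, hs⟩ := A.exists_rightInverse_of_surjective (LinearMap.range_eq_top.2 hA)
  have hs' (a i) : B (s a) (b i) = a i := congrFun (LinearMap.congr_fun hs a) i
  refine ⟨s, hs', fun w => (orthogonal_eq_of_isotropic_of_finrank_eq hB hX hdim).le ?_⟩
  have hzero : (B (w - s fun i => B w (b i))).comp X.subtype = 0 :=
    b.ext fun i => by simp [hs']
  exact fun x hx => halt.isRefl _ _ (LinearMap.congr_fun hzero ⟨x, hx⟩)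

end LagrangianSubspaces

section Representations

variable {G k V : Type*} [AddCommGroup V]

theorem map_asAlgebraHom_eq_lift_mul [Monoid G] [CommSemiring k] [Module k V]
    {ρ : Representation k G V} {χ : G →* k} {μ ν : V →ₗ[k] k} {v : V}
    (h : ∀ g, μ (ρ g v) = χ g * ν v) (P : MonoidAlgebra k G) :
    μ (ρ.asAlgebraHom P v) = MonoidAlgebra.lift k k G χ P * ν v := by
  induction P using MonoidAlgebra.induction_on with
  | of g => rw [Representation.asAlgebraHom_of, MonoidAlgebra.lift_of, h]
  | add P Q hP hQ => rw [map_add, LinearMap.add_apply, map_add, hP, hQ, map_add, add_mul]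
  | smul c P hP =>
    rw [map_smul, LinearMap.smul_apply, map_smul, hP, map_smul, smul_eq_mul, smul_eq_mul,
      mul_assoc]

theorem eq_zero_of_forall_map_eq_zero [Monoid G] [CommSemiring k] [Module k V]
    {ρ : Representation k G V}
    (hirred : ∀ p : Submodule k V, (∀ g v, v ∈ p → ρ g v ∈ p) → p = ⊥ ∨ p = ⊤)
    {l : V →ₗ[k] k} (hl : l ≠ 0) {v : V} (hv : ∀ g, l (ρ g v) = 0) : v = 0 := by
  let p : Submodule k V := ⨅ g, LinearMap.ker (l ∘ₗ ρ g)
  have hmem (u : V) : u ∈ p ↔ ∀ g, l (ρ g u) = 0 := by simp [p]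
  rcases hirred p fun g u hu => (hmem _).2 fun h => by
    rw [← Module.End.mul_apply, ← map_mul, (hmem u).1 hu] with hp | hp
  · exact (Submodule.mem_bot k).1 (hp ▸ (hmem v).2 hv)
  · refine absurd (LinearMap.ext fun u => ?_) hl
    simpa using (hmem u).1 (hp ▸ Submodule.mem_top) 1

theorem exists_eq_smul_of_forall_map_eq_zero [Field k] [Module k V] {l l' : V →ₗ[k] k}
    (h : ∀ v, l v = 0 → l' v = 0) : ∃ c : k, l' = c • l := by
  have hker : ⨅ _ : Unit, LinearMap.ker l ≤ LinearMap.ker l' := by rwa [iInf_const]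
  have hspan := mem_span_of_iInf_ker_le_ker hker
  rw [Set.range_const] at hspan
  exact (Submodule.mem_span_singleton.1 hspan).imp fun _ => Eq.symm

end Representations

namespace Heisenberg

variable {F : Type} [Field F] {W : Type} [AddCommGroup W] [Module F W]
  {B : W →ₗ[F] W →ₗ[F] F} {X : Submodule F W} {ψ : AddChar F ℂ}
  {V : Type} [AddCommGroup V] [Module ℂ V] {ω : Representation ℂ (Heisenberg B) V}

/-- The embedding `x ↦ (x, 0)` of a totally isotropic subspace into the Heisenberg group. -/
def ofIsotropic (hX : ∀ x ∈ X, ∀ y ∈ X, B x y = 0) : Multiplicative X →* Heisenberg B where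
  toFun x := ⟨x.toAdd, 0⟩
  map_one' := rfl
  map_mul' x y := by
    refine Heisenberg.ext rfl ?_
    change 0 = 0 + 0 + B x.toAdd y.toAdd
    rw [hX _ x.toAdd.2 _ y.toAdd.2, add_zero, add_zero]

/-- The character `x ↦ ψ (2 B(w, x))` of `X`, by which the commutator of `(w, 0)` and `(x, 0)`
acts in a representation with central character `ψ`. -/
def commutatorChar (ψ : AddChar F ℂ) (B : W →ₗ[F] W →ₗ[F] F) (X : Submodule F W) (w : W) :
    AddChar X ℂ :=
  (ψ.mulShift 2).compAddMonoidHom ((B w).comp X.subtype).toAddMonoidHom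

theorem commutatorChar_apply (w : W) (x : X) : commutatorChar ψ B X w x = ψ.mulShift 2 (B w x) :=
  rfl

theorem rep_mk (hω : ∀ z v, ω ⟨0, z⟩ v = ψ z • v) (w : W) (t : F) (v : V) :
    ω ⟨w, t⟩ v = ψ t • ω ⟨w, 0⟩ v := by
  have hmul : (⟨w, t⟩ : Heisenberg B) = ⟨0, t⟩ * ⟨w, 0⟩ := by
    refine Heisenberg.ext (zero_add w).symm ?_
    change t = t + 0 + B 0 w
    simp
  rw [hmul, map_mul, Module.End.mul_apply, hω]

theorem rep_rep (hω : ∀ z v, ω ⟨0, z⟩ v = ψ z • v) (w w' : W) (v : V) :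
    ω ⟨w, 0⟩ (ω ⟨w', 0⟩ v) = ψ (B w w') • ω ⟨w + w', 0⟩ v := by
  have hmul : (⟨w, 0⟩ * ⟨w', 0⟩ : Heisenberg B) = ⟨w + w', B w w'⟩ := by
    refine Heisenberg.ext rfl ?_
    change 0 + 0 + B w w' = B w w'
    simp
  rw [← Module.End.mul_apply, ← map_mul, hmul, rep_mk hω]

theorem rep_comm (hω : ∀ z v, ω ⟨0, z⟩ v = ψ z • v) (halt : B.IsAlt) (w w' : W) (v : V) :
    ω ⟨w, 0⟩ (ω ⟨w', 0⟩ v) = ψ.mulShift 2 (B w w') • ω ⟨w', 0⟩ (ω ⟨w, 0⟩ v) := by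
  rw [rep_rep hω, rep_rep hω, smul_smul, AddChar.mulShift_apply, ← AddChar.map_add_eq_mul,
    ← halt.neg w w', add_comm w' w]
  congr 2
  ring

theorem isLocallyConstant_of_isSmoothRep [TopologicalSpace F] [IsTopologicalRing F]
    [TopologicalSpace W] (hω : ∀ z v, ω ⟨0, z⟩ v = ψ z • v) (hsmooth : IsSmoothRep ω) {v : V}
    (hv : v ≠ 0) : IsLocallyConstant ψ := by
  have hcont : Continuous fun z : F => (⟨0, z⟩ : Heisenberg B) :=
    continuous_induced_rng.2 (continuous_const.prodMk continuous_id)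
  refine isLocallyConstant_of_mem_nhds_zero (mem_of_superset
    (((hsmooth v).preimage hcont).mem_nhds (x := 0) (by simp [hω])) fun z hz => ?_)
  have hz : ψ z • v = v := (hω z v).symm.trans hz
  exact smul_left_injective ℂ hv (hz.trans (one_smul ℂ v).symm)

theorem setOf_rep_eq_mem_nhds_zero {T : Type*} [AddCommGroup T] [Module F T] [TopologicalSpace T]
    [TopologicalSpace F] [TopologicalSpace W] (hsmooth : IsSmoothRep ω) (v : V) {f : T →ₗ[F] W}
    (hf : Continuous f) : {t | ω ⟨f t, 0⟩ v = v} ∈ 𝓝 0 := by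
  have hcont : Continuous fun t => (⟨f t, 0⟩ : Heisenberg B) :=
    continuous_induced_rng.2 (hf.prodMk continuous_const)
  refine ((hsmooth v).preimage hcont).mem_nhds ?_
  change ω ⟨f 0, 0⟩ v = v
  rw [map_zero, show (⟨0, 0⟩ : Heisenberg B) = 1 from rfl, map_one, Module.End.one_apply]

theorem commutatorChar_ne_one (hψ : ψ.mulShift 2 ≠ 1) {w : W} {x : X} (hwx : B w x ≠ 0) :
    commutatorChar ψ B X w ≠ 1 := by
  obtain ⟨z, hz⟩ := AddChar.ne_one_iff.1 hψ
  refine AddChar.ne_one_iff.2 ⟨(z / B w x) • x, ?_⟩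
  rwa [commutatorChar_apply, Submodule.coe_smul, map_smul, smul_eq_mul, div_mul_cancel₀ z hwx]

theorem map_rep_rep_eq_commutatorChar_mul (hω : ∀ z v, ω ⟨0, z⟩ v = ψ z • v) (halt : B.IsAlt)
    {l : V →ₗ[ℂ] ℂ} (hl : ∀ x ∈ X, ∀ v, l (ω ⟨x, 0⟩ v) = l v) (w : W) (x : X) (v : V) :
    l (ω ⟨w, 0⟩ (ω ⟨x, 0⟩ v)) = commutatorChar ψ B X w x * l (ω ⟨w, 0⟩ v) := by
  rw [rep_comm hω halt, map_smul, hl x x.2, commutatorChar_apply, smul_eq_mul]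

theorem eq_zero_of_forall_mem_map_rep_eq_zero (hω : ∀ z v, ω ⟨0, z⟩ v = ψ z • v)
    (hirred : ∀ p : Submodule ℂ V, (∀ h v, v ∈ p → ω h v ∈ p) → p = ⊥ ∨ p = ⊤)
    {l : V →ₗ[ℂ] ℂ} (hl : ∀ x ∈ X, ∀ v, l (ω ⟨x, 0⟩ v) = l v) (hl0 : l ≠ 0) {S : Set W}
    (hS : ∀ w, ∃ s ∈ S, w - s ∈ X) {v : V} (hv : ∀ s ∈ S, l (ω ⟨s, 0⟩ v) = 0) : v = 0 := by
  refine eq_zero_of_forall_map_eq_zero hirred hl0 fun ⟨w, t⟩ => ?_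
  obtain ⟨s, hs, hws⟩ := hS w
  have hzero : ψ (B (w - s) s) * l (ω ⟨w, 0⟩ v) = 0 := by
    rw [← hv s hs, ← hl _ hws (ω ⟨s, 0⟩ v), rep_rep hω, sub_add_cancel, map_smul, smul_eq_mul]
  rw [rep_mk hω, map_smul,
    (mul_eq_zero.1 hzero).resolve_left (ψ.val_isUnit _).ne_zero, smul_zero]

section Topology

variable [TopologicalSpace F] [TopologicalSpace W] [ContinuousSMul F W]

theorem setOf_rep_smul_eq_mem_nhds_zero (hsmooth : IsSmoothRep ω) (v : V) (x : W) :
    {t : F | ω ⟨t • x, 0⟩ v = v} ∈ 𝓝 0 :=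
  setOf_rep_eq_mem_nhds_zero hsmooth v (f := LinearMap.toSpanSingleton F W x)
    (continuous_id.smul continuous_const)

variable [IsTopologicalRing F] [LocallyCompactSpace F] [TotallyDisconnectedSpace F] [T2Space F]

section Uniqueness

variable [IsTopologicalAddGroup W] {ι : Type*} [Finite ι] {b : ι → X} {s : (ι → F) →ₗ[F] W}
  {l : V →ₗ[ℂ] ℂ}

theorem exists_isCompact_of_map_rep_ne_zero (hF : ¬ DiscreteTopology F)
    (hω : ∀ z v, ω ⟨0, z⟩ v = ψ z • v) (hψ : IsLocallyConstant (ψ.mulShift 2))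
    (hψ_ne : ψ.mulShift 2 ≠ 1) (halt : B.IsAlt) (hsmooth : IsSmoothRep ω)
    (hs : ∀ a i, B (s a) (b i) = a i) (hl : ∀ x ∈ X, ∀ v, l (ω ⟨x, 0⟩ v) = l v) {v : V}
    (hv : l v = 0) : ∃ K, IsCompact K ∧ 0 ∉ K ∧ ∀ a, l (ω ⟨s a, 0⟩ v) ≠ 0 → a ∈ K := by
  have hN := setOf_rep_eq_mem_nhds_zero hsmooth v s.continuous_on_pi
  refine ⟨Set.univ.pi (fun i => {y | ∀ t ∈ {t : F | ω ⟨t • (b i : W), 0⟩ v = v},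
      ψ.mulShift 2 (y * t) = 1}) \ interior {a | ω ⟨s a, 0⟩ v = v},
    (isCompact_univ_pi fun i => isCompact_setOf_forall_eq_one hF hψ hψ_ne
      (setOf_rep_smul_eq_mem_nhds_zero hsmooth v (b i))).diff isOpen_interior,
    fun h => h.2 (mem_interior_iff_mem_nhds.2 hN), fun a ha => ⟨fun i _ t ht => ?_, fun hav => ?_⟩⟩
  · have hchar := map_rep_rep_eq_commutatorChar_mul hω halt hl (s a) (t • b i) v
    rw [Submodule.coe_smul, show ω ⟨t • (b i : W), 0⟩ v = v from ht, commutatorChar_apply,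
      Submodule.coe_smul, map_smul, hs, smul_eq_mul, mul_comm t] at hchar
    exact (mul_eq_right₀ ha).1 hchar.symm
  · have hav : ω ⟨s a, 0⟩ v = v := interior_subset (s := {a | ω ⟨s a, 0⟩ v = v}) hav
    exact ha (by rw [hav, hv])

theorem map_eq_zero_of_map_eq_zero (hF : ¬ DiscreteTopology F)
    (hω : ∀ z v, ω ⟨0, z⟩ v = ψ z • v) (hψ : IsLocallyConstant (ψ.mulShift 2))
    (hψ_ne : ψ.mulShift 2 ≠ 1) (halt : B.IsAlt) (hX : ∀ x ∈ X, ∀ y ∈ X, B x y = 0)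
    (hsmooth : IsSmoothRep ω)
    (hirred : ∀ p : Submodule ℂ V, (∀ h v, v ∈ p → ω h v ∈ p) → p = ⊥ ∨ p = ⊤)
    (hs : ∀ a i, B (s a) (b i) = a i) (hsX : ∀ w, ∃ a, w - s a ∈ X)
    (hl : ∀ x ∈ X, ∀ v, l (ω ⟨x, 0⟩ v) = l v) (hl0 : l ≠ 0) {l' : V →ₗ[ℂ] ℂ}
    (hl' : ∀ x ∈ X, ∀ v, l' (ω ⟨x, 0⟩ v) = l' v) {v : V} (hv : l v = 0) : l' v = 0 := by
  obtain ⟨K, hK, hK0, hKv⟩ :=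
    exists_isCompact_of_map_rep_ne_zero hF hω hψ hψ_ne halt hsmooth hs hl hv
  have hχ (x : X) : IsLocallyConstant fun a => commutatorChar ψ B X (s a) x :=
    hψ.comp_continuous ((B.flip x).comp s).continuous_on_pi
  have hne (a) (ha : a ∈ K) : (commutatorChar ψ B X (s a)).toMonoidHom ≠ 1 := fun h => by
    obtain ⟨i, hi⟩ := Function.ne_iff.1 (ne_of_mem_of_not_mem ha hK0)
    exact commutatorChar_ne_one hψ_ne (x := b i) (by rwa [hs])
      (AddChar.toMonoidHomEquiv.injective h)
  obtain ⟨P, hP1, hP0⟩ := exists_lift_eq_one_forall_lift_eq_zero (fun x => hχ x.toAdd) hK hne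
  let ρ : Representation ℂ (Multiplicative X) V := ω.comp (ofIsotropic hX)
  have hPv : ρ.asAlgebraHom P v = 0 := by
    refine eq_zero_of_forall_mem_map_rep_eq_zero hω hirred hl hl0 (S := Set.range s)
      (fun w => by simpa using hsX w) ?_
    rintro _ ⟨a, rfl⟩
    have hPa := map_asAlgebraHom_eq_lift_mul (ρ := ρ)
      (χ := (commutatorChar ψ B X (s a)).toMonoidHom) (μ := l ∘ₗ ω ⟨s a, 0⟩)
      (ν := l ∘ₗ ω ⟨s a, 0⟩) (fun x => map_rep_rep_eq_commutatorChar_mul hω halt hl (s a) x.toAdd v)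
      P
    exact hPa.trans (mul_eq_zero.2 (or_iff_not_imp_right.2 fun ha => hP0 a (hKv a ha)))
  have hPl' := map_asAlgebraHom_eq_lift_mul (ρ := ρ) (χ := 1) (μ := l') (ν := l') (v := v)
    (fun x => (hl' _ x.toAdd.2 v).trans (one_mul _).symm) P
  rwa [hPv, map_zero, hP1, one_mul, eq_comm] at hPl'

end Uniqueness

theorem exists_ne_zero_rep_nsmul_eq (hF : ¬ DiscreteTopology F) (hsmooth : IsSmoothRep ω) (x : W)
    (v : V) : ∃ N : ℕ, N ≠ 0 ∧ ω ⟨N • x, 0⟩ v = v := by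
  obtain ⟨O, -, hO⟩ := exists_isOpen_isCompact_subring hF
  obtain ⟨N, hN, hNv⟩ := exists_pos_natCast_mem hO (setOf_rep_smul_eq_mem_nhds_zero hsmooth v x)
  exact ⟨N, hN.ne', by rwa [← Nat.cast_smul_eq_nsmul F]⟩

theorem exists_addChar_eigenfunctional (hF : ¬ DiscreteTopology F) (hsmooth : IsSmoothRep ω)
    (hX : ∀ x ∈ X, ∀ y ∈ X, B x y = 0) {v : V} (hv : v ≠ 0) :
    ∃ (θ : AddChar X ℂ) (μ : V →ₗ[ℂ] ℂ), μ ≠ 0 ∧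
      (∀ x, IsLocallyConstant fun t : F => θ (t • x)) ∧
      ∀ (x : X) (u : V), μ (ω ⟨x, 0⟩ u) = θ x * μ u := by
  let ρ : Representation ℂ (Multiplicative X) V := ω.comp (ofIsotropic hX)
  obtain ⟨χ, μ, hμv, hμ⟩ := exists_eigenfunctional (ρ := ρ) hv fun x =>
    exists_ne_zero_rep_nsmul_eq hF hsmooth x.toAdd.1
  let θ : AddChar X ℂ := AddChar.toMonoidHomEquiv.symm χ
  have hθ (x : X) (u : V) : μ (ω ⟨x, 0⟩ u) = θ x * μ u := hμ (Multiplicative.ofAdd x) u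
  refine ⟨θ, μ, fun h => hμv (by rw [h, LinearMap.zero_apply]), fun x => ?_, hθ⟩
  refine isLocallyConstant_of_mem_nhds_zero
    (θ := θ.compAddMonoidHom (LinearMap.toSpanSingleton F X x).toAddMonoidHom) ?_
  filter_upwards [setOf_rep_smul_eq_mem_nhds_zero hsmooth v x] with t ht
  exact (mul_eq_right₀ hμv).1 ((hθ (t • x) v).symm.trans (congrArg μ ht))

theorem exists_ne_zero_forall_map_rep_eq [FiniteDimensional F W] (hF : ¬ DiscreteTopology F)
    (hω : ∀ z v, ω ⟨0, z⟩ v = ψ z • v) (hψ : IsLocallyConstant (ψ.mulShift 2))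
    (hψ_ne : ψ.mulShift 2 ≠ 1) (halt : B.IsAlt) (hB : B.Nondegenerate)
    (hX : ∀ x ∈ X, ∀ y ∈ X, B x y = 0) (hsmooth : IsSmoothRep ω) {v : V} (hv : v ≠ 0) :
    ∃ l : V →ₗ[ℂ] ℂ, l ≠ 0 ∧ ∀ x ∈ X, ∀ v, l (ω ⟨x, 0⟩ v) = l v := by
  obtain ⟨θ, μ, hμ0, hθ, hμ⟩ := exists_addChar_eigenfunctional hF hsmooth hX hv
  obtain ⟨f, hf⟩ := exists_linearMap_forall_eq hF hψ hψ_ne hθ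
  obtain ⟨w, hw⟩ := exists_forall_mem_apply_eq hB (-f)
  refine ⟨μ ∘ₗ ω ⟨w, 0⟩, fun h => hμ0 (LinearMap.ext fun u => ?_), fun x hx u => ?_⟩
  · simpa [ω.self_inv_apply] using LinearMap.congr_fun h (ω ⟨w, 0⟩⁻¹ u)
  · have hone : ψ.mulShift 2 (B w x) * θ ⟨x, hx⟩ = 1 := by
      rw [hf, hw ⟨x, hx⟩, ← AddChar.map_add_eq_mul, LinearMap.neg_apply, neg_add_cancel,
        AddChar.map_zero_eq_one]
    rw [LinearMap.comp_apply, rep_comm hω halt, map_smul, hμ ⟨x, hx⟩, smul_eq_mul, ← mul_assoc,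
      hone, one_mul, LinearMap.comp_apply]

end Topology

end Heisenberg

open Heisenberg in
theorem lagrangian_invariant_functional_exists_unique_general
    {F : Type} [Field F] [TopologicalSpace F] [IsTopologicalRing F]
    [LocallyCompactSpace F] [TotallyDisconnectedSpace F] [T2Space F]
    (hF : ¬ DiscreteTopology F) (h2 : (2 : F) ≠ 0)
    {ψ : AddChar F ℂ} (hψ_ne : ∃ z : F, ψ z ≠ 1)
    {W : Type} [AddCommGroup W] [Module F W] [FiniteDimensional F W]
    [TopologicalSpace W] [IsTopologicalAddGroup W] [ContinuousSMul F W]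
    {B : W →ₗ[F] W →ₗ[F] F} (halt : B.IsAlt) (hnondeg : B.SeparatingLeft)
    {X : Submodule F W} (hX : ∀ x ∈ X, ∀ y ∈ X, B x y = 0)
    (hdim : Module.finrank F W = 2 * Module.finrank F X)
    {V : Type} [AddCommGroup V] [Module ℂ V] {ω : Representation ℂ (Heisenberg B) V}
    (hsmooth : IsSmoothRep ω) (hnonzero : ∃ v : V, v ≠ 0)
    (hirred : ∀ p : Submodule ℂ V, (∀ h v, v ∈ p → ω h v ∈ p) → p = ⊥ ∨ p = ⊤)
    (hω : ∀ z v, ω ⟨0, z⟩ v = ψ z • v) :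
    (∃ l : V →ₗ[ℂ] ℂ, l ≠ 0 ∧ ∀ x ∈ X, ∀ v, l (ω ⟨x, 0⟩ v) = l v) ∧
      ∀ l l' : V →ₗ[ℂ] ℂ, (∀ x ∈ X, ∀ v, l (ω ⟨x, 0⟩ v) = l v) →
        (∀ x ∈ X, ∀ v, l' (ω ⟨x, 0⟩ v) = l' v) → l ≠ 0 → ∃ c : ℂ, l' = c • l := by
  obtain ⟨z, hz⟩ := hψ_ne
  obtain ⟨v₀, hv₀⟩ := hnonzero
  have hψ : IsLocallyConstant (ψ.mulShift 2) :=
    (isLocallyConstant_of_isSmoothRep hω hsmooth hv₀).comp_continuous (continuous_const_mul 2)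
  have hψ_ne : ψ.mulShift 2 ≠ 1 :=
    AddChar.ne_one_iff.2 ⟨2⁻¹ * z, by rwa [AddChar.mulShift_apply, mul_inv_cancel_left₀ h2]⟩
  have hB : B.Nondegenerate := halt.isRefl.nondegenerate_iff_separatingLeft.2 hnondeg
  refine ⟨exists_ne_zero_forall_map_rep_eq hF hω hψ hψ_ne halt hB hX hsmooth hv₀,
    fun l l' hl hl' hl0 => ?_⟩
  obtain ⟨s, hs, hsX⟩ :=
    exists_rightInverse_of_lagrangian hB halt hX hdim (Module.finBasis F X)
  exact exists_eq_smul_of_forall_map_eq_zero fun v =>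
    map_eq_zero_of_map_eq_zero hF hω hψ hψ_ne halt hX hsmooth hirred hs
      (fun w => ⟨_, hsX w⟩) hl hl0 hl'

/-- **Existence and uniqueness of the Lagrangian-invariant ("Schrödinger")
functional.**  Let `X` be a Lagrangian subspace of a finite-dimensional
symplectic `F`-space `W`, viewed as an abelian subgroup of `H(W)` via
`x ↦ (x, 0)`.  Let `ω` be an irreducible smooth representation of `H(W)` with
central character `ψ`.  Then there exists a nonzero linear functional on `ω`
invariant under `X`, unique up to scalar multiples. -/
theorem lagrangian_invariant_functional_exists_unique
    -- `F` : a non-archimedean local field of characteristic zero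
    (F : Type) [Field F] [CharZero F] [TopologicalSpace F] [IsTopologicalRing F]
    [LocallyCompactSpace F] [TotallyDisconnectedSpace F] [T2Space F]
    (hF : ¬ DiscreteTopology F)
    -- a fixed nontrivial unitary character `ψ` of `F`
    (ψ : AddChar F ℂ) (hψ_unitary : ∀ z : F, ‖ψ z‖ = 1) (hψ_ne : ∃ z : F, ψ z ≠ 1)
    -- `W` : a finite-dimensional symplectic `F`-space
    (Wsp : Type) [AddCommGroup Wsp] [Module F Wsp] [FiniteDimensional F Wsp]
    [TopologicalSpace Wsp] [IsTopologicalAddGroup Wsp] [ContinuousSMul F Wsp]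
    (B : Wsp →ₗ[F] Wsp →ₗ[F] F)
    (halt : ∀ w : Wsp, B w w = 0)
    (hnondeg : ∀ w : Wsp, (∀ w' : Wsp, B w w' = 0) → w = 0)
    -- `X` : a Lagrangian subspace of `W`
    (X : Submodule F Wsp)
    (hX_isotropic : ∀ x ∈ X, ∀ y ∈ X, B x y = 0)
    (hX_lagrangian : Module.finrank F Wsp = 2 * Module.finrank F X)
    -- `ω` : an irreducible smooth representation of `H(W)` with central character `ψ`
    (V : Type) [AddCommGroup V] [Module ℂ V]
    (ω : Representation ℂ (Heisenberg B) V)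
    (hsmooth : IsSmoothRep ω)
    (hnonzero : ∃ v : V, v ≠ 0)
    (hirred : ∀ p : Submodule ℂ V,
      (∀ (h : Heisenberg B) (v : V), v ∈ p → ω h v ∈ p) → p = ⊥ ∨ p = ⊤)
    (hcentral : ∀ (z : F) (v : V), ω ⟨0, z⟩ v = ψ z • v) :
    (∃ lam : V →ₗ[ℂ] ℂ, lam ≠ 0 ∧
        ∀ x ∈ X, ∀ v : V, lam (ω ⟨x, 0⟩ v) = lam v) ∧
    (∀ lam₁ lam₂ : V →ₗ[ℂ] ℂ,
        (∀ x ∈ X, ∀ v : V, lam₁ (ω ⟨x, 0⟩ v) = lam₁ v) →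
        (∀ x ∈ X, ∀ v : V, lam₂ (ω ⟨x, 0⟩ v) = lam₂ v) →
        lam₁ ≠ 0 → ∃ c : ℂ, lam₂ = c • lam₁) := by
  exact lagrangian_invariant_functional_exists_unique_general hF two_ne_zero hψ_ne halt hnondeg
    hX_isotropic hX_lagrangian hsmooth hnonzero hirred hcentral
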